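/- Fishburn's alternating domain F_n on {1,…,n} is (6, s)-abundant for the following pairs (n, s): (6, 45), (7, 42), (8, 39), and (9, 32); that is, for each such n, the restriction of F_n to every 6-element subset of {1,…,n} contains at least s distinct linear orders. -/

import Mathlib

/-- `r` is a strict total order on `X`, supported on `X` (i.e. `r` never relates
elements outside `X`). -/
def IsLinearOrderOn {α : Type*} (X : Set α) (r : α → α → Prop) : Prop :=
  (∀ a b, r a b → a ∈ X ∧ b ∈ X) ∧
  (∀ a ∈ X, ¬ r a a) ∧
  (∀ a ∈ X, ∀ b ∈ X, ∀ c ∈ X, r a b → r b c → r a c) ∧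
  (∀ a ∈ X, ∀ b ∈ X, a ≠ b → r a b ∨ r b a)

/-- A domain on `X` is a set of linear orders on `X`. -/
def IsDomainOn {α : Type*} (X : Set α) (D : Set (α → α → Prop)) : Prop :=
  ∀ r ∈ D, IsLinearOrderOn X r

/-- The restriction of the order `r` to the subset `A`. -/
def restrictRel {α : Type*} (A : Set α) (r : α → α → Prop) : α → α → Prop :=
  fun a b => a ∈ A ∧ b ∈ A ∧ r a b

/-- The restriction of the domain `D` to the subset `A`: the set of linear orders
on `A` induced by the orders in `D`. -/
def restrictDom {α : Type*} (A : Set α) (D : Set (α → α → Prop)) :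
    Set (α → α → Prop) :=
  restrictRel A '' D

/-- `D` is `(k,s)`-abundant on `X`: its restriction to every `k`-element subset of `X`
contains at least `s` distinct linear orders. -/
def IsAbundant {α : Type*} (X : Set α) (D : Set (α → α → Prop)) (k s : ℕ) : Prop :=
  ∀ A : Set α, A ⊆ X → A.ncard = k → s ≤ (restrictDom A D).ncard

/-- `D` is exactly `(k,s)`-abundant: `(k,s)`-abundant but not `(k,s+1)`-abundant. -/
def IsExactlyAbundant {α : Type*} (X : Set α) (D : Set (α → α → Prop)) (k s : ℕ) : Prop :=
  IsAbundant X D k s ∧ ¬ IsAbundant X D k (s + 1)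

/-- Fishburn's alternating domain on `{1,…,n}`: all linear orders `r` on `{1,…,n}`
such that for every triple `a < b < c`, if `b` is odd then `r` does not rank `b`
first among `{a,b,c}`, and if `b` is even then `r` does not rank `b` last among
`{a,b,c}`. -/
def fishburnAlternating (n : ℕ) : Set (ℕ → ℕ → Prop) :=
  { r | IsLinearOrderOn (Set.Icc 1 n) r ∧
      ∀ a b c : ℕ, a ∈ Set.Icc 1 n → b ∈ Set.Icc 1 n → c ∈ Set.Icc 1 n →
        a < b → b < c →
          (Odd b → ¬ (r b a ∧ r b c)) ∧ (Even b → ¬ (r a b ∧ r c b)) }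

/-!
Consider, more generally, the orders in which the middle alternative `b` of a triple is never
first or never last according to an arbitrary predicate `P b`. Such an order on `A` always extends
to one more alternative `x`: by reversal we may assume `P x`, and then `x` can be placed directly
after the alternatives that are forced to precede it. Hence the restriction of the domain to `A`
is the domain of the same kind on `A`, and for `|A| = 6` its size depends only on the word of
`P`-values on the four inner elements of `A`. For Fishburn's domain this is a word of parities,
and each repeated parity requires a gap in `A`, so `A ⊆ {1, …, 6 + d}` allows at most `d`
repetitions. Enumerating the words of length four gives the bounds.
-/

section Insertion

variable {α : Type*} {X A D : Set α} {r : α → α → Prop} {x a b c : α}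

namespace IsLinearOrderOn

theorem not_self (h : IsLinearOrderOn X r) : ¬ r a a :=
  fun ha => h.2.1 a (h.1 a a ha).1 ha

theorem trans (h : IsLinearOrderOn X r) (hab : r a b) (hbc : r b c) : r a c :=
  h.2.2.1 a (h.1 a b hab).1 b (h.1 a b hab).2 c (h.1 b c hbc).2 hab hbc

theorem total (h : IsLinearOrderOn X r) (ha : a ∈ X) (hb : b ∈ X) (hab : a ≠ b) :
    r a b ∨ r b a :=
  h.2.2.2 a ha b hb hab

theorem flip (h : IsLinearOrderOn X r) : IsLinearOrderOn X (flip r) :=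
  ⟨fun a b hab => (h.1 b a hab).symm, fun _ _ => h.not_self,
    fun _ _ _ _ _ _ hab hbc => h.trans hbc hab,
    fun _ ha _ hb hab => (h.total ha hb hab).symm⟩

theorem restrictRel (h : IsLinearOrderOn X r) (hA : A ⊆ X) :
    IsLinearOrderOn A (restrictRel A r) :=
  ⟨fun _ _ hab => ⟨hab.1, hab.2.1⟩, fun _ _ ha => h.not_self ha.2.2,
    fun _ ha _ _ _ hc hab hbc => ⟨ha, hc, h.trans hab.2.2 hbc.2.2⟩,
    fun _ ha _ hb hab => (h.total (hA ha) (hA hb) hab).imp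
      (fun hr => ⟨ha, hb, hr⟩) fun hr => ⟨hb, ha, hr⟩⟩

theorem restrictRel_eq_self (h : IsLinearOrderOn X r) : _root_.restrictRel X r = r :=
  funext₂ fun a b => propext
    ⟨fun hab => hab.2.2, fun hab => ⟨(h.1 a b hab).1, (h.1 a b hab).2, hab⟩⟩

end IsLinearOrderOn

theorem finite_setOf_isLinearOrderOn (hX : X.Finite) :
    {r : α → α → Prop | IsLinearOrderOn X r}.Finite := by
  refine Set.Finite.of_injOn (f := fun r => {p : α × α | r p.1 p.2}) (t := 𝒫 (X ×ˢ X)) ?_ ?_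
    (hX.prod hX).finite_subsets
  · exact fun r hr p hp => hr.1 p.1 p.2 hp
  · exact fun r _ s _ hrs => funext₂ fun a b => congrArg ((a, b) ∈ ·) hrs

/-- The order `r` on `A` with a new alternative `x` placed directly after the initial
segment `D` of `A`. -/
def insertAfter (A D : Set α) (x : α) (r : α → α → Prop) (a b : α) : Prop :=
  r a b ∨ (a ∈ D ∧ b = x) ∨ (a = x ∧ b ∈ A \ D)

theorem IsLinearOrderOn.insertAfter (h : IsLinearOrderOn A r) (hx : x ∉ A) (hDA : D ⊆ A)
    (hD : ∀ a b, r a b → b ∈ D → a ∈ D) :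
    IsLinearOrderOn (insert x A) (insertAfter A D x r) := by
  have mem := h.1
  have irrefl := @h.not_self
  have trans := @h.trans
  have total := @h.total
  refine ⟨?_, ?_, ?_, ?_⟩ <;> grind [_root_.insertAfter]

theorem restrictRel_insertAfter (h : IsLinearOrderOn A r) (hx : x ∉ A) :
    restrictRel A (insertAfter A D x r) = r := by
  have mem := h.1
  funext a b
  grind [restrictRel, insertAfter]

theorem restrictRel_restrictRel {B : Set α} (hBA : B ⊆ A) :
    restrictRel B (restrictRel A r) = restrictRel B r := by
  funext a b
  grind [restrictRel]

theorem restrictRel_flip : restrictRel A (flip r) = flip (restrictRel A r) := by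
  funext a b
  grind [restrictRel, flip]

end Insertion

section GeneralizedFishburn

variable {α : Type*} [LinearOrder α] {P : α → Prop} {X A D : Set α} {r : α → α → Prop} {x : α}

/-- The domain of all linear orders on `X` in which the middle alternative `b` of a triple
`a < b < c` is never ranked first if `P b`, and never last otherwise. Equivalently, the
alternatives ranked below `b` (if `P b`) or above `b` (otherwise) all lie on one side of `b`;
this symmetric form avoids distinguishing `a < b < c` from `c < b < a`. -/
def generalizedFishburn (P : α → Prop) (X : Set α) : Set (α → α → Prop) :=
  {r | IsLinearOrderOn X r ∧
    (∀ a b c, P b → r b a → r b c → (a < b ↔ c < b)) ∧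
    (∀ a b c, ¬ P b → r a b → r c b → (a < b ↔ c < b))}

theorem fishburnAlternating_eq_generalizedFishburn (n : ℕ) :
    fishburnAlternating n = generalizedFishburn Odd (Set.Icc 1 n) := by
  ext r
  refine and_congr_right fun h => ⟨fun hr => ?_, fun hr a b c _ _ _ hab hbc => ?_⟩
  · have mem := h.1
    have irrefl := @h.not_self
    constructor <;> grind
  · grind

theorem flip_mem_generalizedFishburn (h : r ∈ generalizedFishburn P X) :
    flip r ∈ generalizedFishburn (fun a => ¬ P a) X :=
  ⟨h.1.flip, fun a b c => h.2.2 a b c, fun a b c hb => h.2.1 a b c (not_not.1 hb)⟩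

theorem restrictRel_mem_generalizedFishburn (h : r ∈ generalizedFishburn P X) (hA : A ⊆ X) :
    restrictRel A r ∈ generalizedFishburn P A :=
  ⟨h.1.restrictRel hA, fun a b c hb hba hbc => h.2.1 a b c hb hba.2.2 hbc.2.2,
    fun a b c hb hab hcb => h.2.2 a b c hb hab.2.2 hcb.2.2⟩

theorem insertAfter_mem_generalizedFishburn (h : r ∈ generalizedFishburn P A) (hx : x ∉ A)
    (hDA : D ⊆ A) (hD : ∀ a b, r a b → b ∈ D → a ∈ D) (hPx : P x)
    (hx_below : ∀ a ∈ A \ D, ∀ c ∈ A \ D, (a < x ↔ c < x))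
    (h_before : ∀ a b, P b → b ∈ D → r b a → (a < b ↔ x < b))
    (h_after : ∀ a b, ¬ P b → b ∈ A \ D → r a b → (a < b ↔ x < b)) :
    insertAfter A D x r ∈ generalizedFishburn P (insert x A) := by
  obtain ⟨hlin, hfirst, hlast⟩ := h
  have mem := hlin.1
  refine ⟨hlin.insertAfter hx hDA hD, ?_, ?_⟩ <;> grind [insertAfter]

/-- The alternatives of `A` that have to precede a new alternative `x` with `P x`: those that
weakly precede some `b` which `x` may not precede, and those ranked weakly above alternatives
on both sides of `x`. -/
def insertionCut (P : α → Prop) (A : Set α) (r : α → α → Prop) (x : α) : Set α :=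
  {d ∈ A | (∃ a b, (d = b ∨ r d b) ∧ ¬ P b ∧ r a b ∧ ¬ (a < b ↔ x < b)) ∨
    ∃ a c, (d = a ∨ r d a) ∧ (d = c ∨ r d c) ∧ a < x ∧ x < c}

theorem insertAfter_insertionCut_mem (h : r ∈ generalizedFishburn P A) (hx : x ∉ A)
    (hPx : P x) :
    insertAfter A (insertionCut P A r x) x r ∈ generalizedFishburn P (insert x A) := by
  have ⟨hlin, hfirst, hlast⟩ := h
  have mem := hlin.1
  have trans := @hlin.trans
  have total := @hlin.total
  refine insertAfter_mem_generalizedFishburn h hx (Set.sep_subset _ _) ?_ hPx ?_ ?_ ?_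
  · grind [insertionCut]
  · grind [insertionCut]
  · rintro a b hPb ⟨-, ⟨i, j, hbj, hPj, hij, hside⟩ | ⟨i, k, hbi, hbk, hix, hxk⟩⟩ hba
    · have hbj : r b j := hbj.resolve_left (by grind)
      have hside_b : a < b ↔ j < b := hfirst a b j hPb hba hbj
      have hside_j : i < j ↔ b < j := hlast i j b hPj hij hbj
      grind
    · grind
  · grind [insertionCut]

theorem exists_insert_extension (h : r ∈ generalizedFishburn P A) (hx : x ∉ A) :
    ∃ r' ∈ generalizedFishburn P (insert x A), restrictRel A r' = r := by
  by_cases hPx : P x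
  · exact ⟨_, insertAfter_insertionCut_mem h hx hPx, restrictRel_insertAfter h.1 hx⟩
  · have hflip := flip_mem_generalizedFishburn h
    refine ⟨flip (insertAfter A (insertionCut (fun a => ¬ P a) A (flip r) x) x (flip r)), ?_, ?_⟩
    · simpa only [not_not] using
        flip_mem_generalizedFishburn (insertAfter_insertionCut_mem hflip hx hPx)
    · rw [restrictRel_flip, restrictRel_insertAfter hflip.1 hx]
      rfl

theorem subset_restrictDom_generalizedFishburn_union {B : Set α} (hB : B.Finite) :
    generalizedFishburn P A ⊆ restrictDom A (generalizedFishburn P (B ∪ A)) := by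
  induction B, hB using Set.Finite.induction_on with
  | empty => exact fun r hr => ⟨r, by rwa [Set.empty_union], hr.1.restrictRel_eq_self⟩
  | @insert x B _ _ ih =>
    intro r hr
    obtain ⟨s, hs, rfl⟩ := ih hr
    by_cases hx : x ∈ B ∪ A
    · exact ⟨s, by rwa [Set.insert_union, Set.insert_eq_of_mem hx], rfl⟩
    · obtain ⟨t, ht, rfl⟩ := exists_insert_extension hs hx
      exact ⟨t, by rwa [Set.insert_union],
        (restrictRel_restrictRel Set.subset_union_right).symm⟩

theorem restrictDom_generalizedFishburn (hX : X.Finite) (hA : A ⊆ X) :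
    restrictDom A (generalizedFishburn P X) = generalizedFishburn P A := by
  refine Set.Subset.antisymm ?_ ?_
  · rintro _ ⟨r, hr, rfl⟩
    exact restrictRel_mem_generalizedFishburn hr hA
  · simpa only [Set.union_eq_self_of_subset_right hA] using
      subset_restrictDom_generalizedFishburn_union (P := P) (A := A) hX

end GeneralizedFishburn

section ListOrder

variable {α : Type*} [DecidableEq α] {l l' : List α}

/-- The ranking of the members of `l` in their order of first occurrence. -/
def listOrder (l : List α) (a b : α) : Prop :=
  a ∈ l ∧ b ∈ l ∧ l.idxOf a < l.idxOf b

theorem isLinearOrderOn_listOrder (l : List α) : IsLinearOrderOn {a | a ∈ l} (listOrder l) := by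
  refine ⟨fun a b h => ⟨h.1, h.2.1⟩, fun a _ h => lt_irrefl _ h.2.2,
    fun a _ b _ c _ hab hbc => ⟨hab.1, hbc.2.1, hab.2.2.trans hbc.2.2⟩, fun a ha b hb hab => ?_⟩
  have hidx : l.idxOf a ≠ l.idxOf b := mt (List.idxOf_inj ha).1 hab
  exact hidx.lt_or_gt.imp (fun h => ⟨ha, hb, h⟩) fun h => ⟨hb, ha, h⟩

theorem pairwise_listOrder (hl : l.Nodup) : l.Pairwise (listOrder l) :=
  List.pairwise_iff_getElem.2 fun i j hi hj hij =>
    ⟨List.getElem_mem hi, List.getElem_mem hj, by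
      rwa [hl.idxOf_getElem, hl.idxOf_getElem]⟩

theorem eq_of_perm_of_listOrder_eq (hl : l.Nodup) (hperm : l.Perm l')
    (h : listOrder l = listOrder l') : l = l' := by
  have hl' : l'.Pairwise (listOrder l) := h ▸ pairwise_listOrder (hperm.nodup_iff.1 hl)
  exact hperm.eq_of_pairwise (fun a b _ _ hab hba => absurd (hab.2.2.trans hba.2.2) (lt_irrefl _))
    (pairwise_listOrder hl) hl'

theorem triple_of_triplewise {p : α → α → α → Prop} {a b c : α} (hl : l.Triplewise p)
    (hab : listOrder l a b) (hbc : listOrder l b c) : p a b c := by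
  have hget := List.triplewise_iff_getElem.1 hl _ _ _ hab.2.2 hbc.2.2
    (List.idxOf_lt_length_iff.2 hbc.2.1)
  simpa only [List.getElem_idxOf] using hget

end ListOrder

section FishburnRankings

variable {α : Type*} [LinearOrder α] {P : α → Prop} {l l' : List α}

instance decidableTriplewise {α : Type*} (p : α → α → α → Prop) [∀ a b c, Decidable (p a b c)] :
    (l : List α) → Decidable (l.Triplewise p)
  | [] => isTrue .nil
  | _ :: l =>
    have := decidableTriplewise p l
    decidable_of_iff _ List.triplewise_cons.symm

/-- The condition that the domain `generalizedFishburn P` imposes on alternatives ranked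
`a` before `b` before `c`. -/
def FishburnTriple (P : α → Prop) (a b c : α) : Prop :=
  (P a → (b < a ↔ c < a)) ∧ (¬ P c → (a < c ↔ b < c))

instance [DecidablePred P] (a b c : α) : Decidable (FishburnTriple P a b c) :=
  inferInstanceAs (Decidable (_ ∧ _))

theorem listOrder_mem_generalizedFishburn (hl : l.Triplewise (FishburnTriple P)) :
    listOrder l ∈ generalizedFishburn P {a | a ∈ l} := by
  have hlin := isLinearOrderOn_listOrder l
  have triple {a b c : α} : listOrder l a b → listOrder l b c → FishburnTriple P a b c :=
    triple_of_triplewise hl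
  refine ⟨hlin, fun a b c hb hba hbc => ?_, fun a b c hb hab hcb => ?_⟩
  · rcases eq_or_ne a c with rfl | hac
    · rfl
    rcases hlin.total hba.2.1 hbc.2.1 hac with h | h
    · exact (triple hba h).1 hb
    · exact ((triple hbc h).1 hb).symm
  · rcases eq_or_ne a c with rfl | hac
    · rfl
    rcases hlin.total hab.1 hcb.1 hac with h | h
    · exact (triple h hcb).2 hb
    · exact ((triple h hab).2 hb).symm

/-- The permutations of `l` that satisfy the condition of `generalizedFishburn P`, built by
inserting one alternative at a time. Discarding violating partial rankings at every step keeps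
the enumeration cheap enough for kernel evaluation. -/
def fishburnRankings (P : α → Prop) [DecidablePred P] : List α → List (List α)
  | [] => [[]]
  | a :: l => ((fishburnRankings P l).flatMap (List.permutations'Aux a)).filter
      fun l' => l'.Triplewise (FishburnTriple P)

variable [DecidablePred P]

theorem fishburnRankings_sublist_permutations' (l : List α) :
    (fishburnRankings P l).Sublist l.permutations' := by
  induction l with
  | nil => exact .refl _
  | cons a l ih => exact List.filter_sublist.trans (ih.flatMap _)

theorem triplewise_of_mem_fishburnRankings (h : l' ∈ fishburnRankings P l) :
    l'.Triplewise (FishburnTriple P) := by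
  cases l with
  | nil => simp_all [fishburnRankings]
  | cons a l => simpa using (List.mem_filter.1 h).2

theorem fishburnRankings_map {β : Type*} [LinearOrder β] {f : β → α} (hf : StrictMono f)
    (l : List β) :
    fishburnRankings P (l.map f) = (fishburnRankings (P ∘ f) l).map (List.map f) := by
  have htriple (l' : List β) : (l'.map f).Triplewise (FishburnTriple P) ↔
      l'.Triplewise (FishburnTriple (P ∘ f)) := by
    simp only [List.triplewise_map, FishburnTriple, hf.lt_iff_lt]
    rfl
  induction l with
  | nil => rfl
  | cons a l ih =>
    simp only [fishburnRankings, List.map_cons, ih, List.flatMap_map,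
      ← List.map_map_permutations'Aux, ← List.map_flatMap, List.filter_map, Function.comp_def,
      htriple]

theorem length_fishburnRankings_le_ncard (hl : l.Nodup) :
    (fishburnRankings P l).length ≤ (generalizedFishburn P {a | a ∈ l}).ncard := by
  have hsub := fishburnRankings_sublist_permutations' (P := P) l
  have hperm {l'} (h : l' ∈ fishburnRankings P l) : l'.Perm l :=
    List.mem_permutations'.1 (hsub.subset h)
  have hnodup : (fishburnRankings P l).Nodup := hsub.nodup <|
    (List.permutations_perm_permutations' l).nodup_iff.1 (List.nodup_permutations l hl)
  rw [← List.toFinset_card_of_nodup hnodup, ← Set.ncard_coe_finset]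
  refine Set.ncard_le_ncard_of_injOn listOrder ?_ ?_
    ((finite_setOf_isLinearOrderOn l.finite_toSet).subset fun _ h => h.1)
  · intro l' h
    have h := List.mem_toFinset.1 h
    have hmem : {a | a ∈ l'} = {a | a ∈ l} := Set.ext fun _ => (hperm h).mem_iff
    exact hmem ▸ listOrder_mem_generalizedFishburn (triplewise_of_mem_fishburnRankings h)
  · intro l₁ h₁ l₂ h₂ h
    have h₁ := hperm (List.mem_toFinset.1 h₁)
    have h₂ := hperm (List.mem_toFinset.1 h₂)
    exact eq_of_perm_of_listOrder_eq (h₁.nodup_iff.2 hl) (h₁.trans h₂.symm) h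

end FishburnRankings

section ParityWord

/-- The number of adjacent pairs of equal letters in the word `w`. -/
def repetitions {β : Type*} [DecidableEq β] {k : ℕ} (w : Fin (k + 1) → β) : ℕ :=
  Finset.card {i : Fin k | w i.castSucc = w i.succ}

theorem repetitions_succ {β : Type*} [DecidableEq β] {k : ℕ} (w : Fin (k + 2) → β) :
    repetitions w = repetitions (fun i => w i.castSucc) +
      if w (Fin.last k).castSucc = w (Fin.last (k + 1)) then 1 else 0 := by
  simp only [repetitions, Finset.card_filter, Fin.sum_univ_castSucc, Fin.succ_castSucc,
    Fin.succ_last]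

theorem add_repetitions_parity_le {k : ℕ} {f : Fin (k + 1) → ℕ} (hf : StrictMono f) :
    f 0 + k + repetitions (fun i => decide (Odd (f i))) ≤ f (Fin.last k) := by
  induction k with
  | zero => simp [repetitions]
  | succ k ih =>
    have hinit : f 0 + k + repetitions (fun i => decide (Odd (f i.castSucc))) ≤
        f (Fin.last k).castSucc := ih (hf.comp Fin.strictMono_castSucc)
    have hstep : f (Fin.last k).castSucc < f (Fin.last (k + 1)) := hf (Fin.castSucc_lt_last _)
    rw [repetitions_succ]
    grind

/-- The least size of a domain `generalizedFishburn P` on six alternatives whose word of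
`P`-values on the four inner alternatives has the given number of repetitions, which is at
most `3`. A constant word yields the `2 ^ 5` single-peaked or single-dipped orders. -/
def sixAbundance : ℕ → ℕ
  | 0 => 45
  | 1 => 42
  | 2 => 39
  | _ => 32

theorem antitone_sixAbundance : Antitone sixAbundance :=
  antitone_nat_of_succ_le fun
    | 0 | 1 | 2 | _ + 3 => by simp [sixAbundance]

theorem sixAbundance_le_length_fishburnRankings (w : Fin 6 → Bool) :
    sixAbundance (repetitions fun i : Fin 4 => w i.succ.castSucc) ≤
      (fishburnRankings (w · = true) (List.finRange 6)).length := by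
  revert w
  decide +kernel

theorem sixAbundance_le_ncard_generalizedFishburn {α : Type*} [LinearOrder α] (P : α → Prop)
    [DecidablePred P] (f : Fin 6 ↪o α) :
    sixAbundance (repetitions fun i : Fin 4 => decide (P (f i.succ.castSucc))) ≤
      (generalizedFishburn P (Set.range f)).ncard := by
  have hrange : {a | a ∈ (List.finRange 6).map f} = Set.range f := by simp [Set.range]
  have hnodup : ((List.finRange 6).map f).Nodup := (List.nodup_finRange 6).map f.injective
  calc sixAbundance (repetitions fun i : Fin 4 => decide (P (f i.succ.castSucc)))
      ≤ (fishburnRankings (P ∘ f) (List.finRange 6)).length := by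
        simpa [Function.comp_def] using
          sixAbundance_le_length_fishburnRankings fun i => decide (P (f i))
    _ = (fishburnRankings P ((List.finRange 6).map f)).length := by
        rw [fishburnRankings_map f.strictMono, List.length_map]
    _ ≤ (generalizedFishburn P (Set.range f)).ncard :=
        hrange ▸ length_fishburnRankings_le_ncard hnodup

theorem repetitions_parity_le (f : Fin 6 ↪o ℕ) {d : ℕ} (hf : Set.range f ⊆ Set.Icc 1 (6 + d)) :
    repetitions (fun i : Fin 4 => decide (Odd (f i.succ.castSucc))) ≤ d := by
  have hinner : f 1 + 3 + repetitions (fun i : Fin 4 => decide (Odd (f i.succ.castSucc))) ≤ f 4 :=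
    add_repetitions_parity_le
      (f.strictMono.comp (Fin.strictMono_castSucc.comp Fin.strictMono_succ))
  have hfirst : f 0 < f 1 := f.strictMono (by decide)
  have hlast : f 4 < f 5 := f.strictMono (by decide)
  have hmin : 1 ≤ f 0 := (hf ⟨0, rfl⟩).1
  have hmax : f 5 ≤ 6 + d := (hf ⟨5, rfl⟩).2
  omega

end ParityWord

theorem fishburn_six_abundance_general (d : ℕ) :
    IsAbundant (Set.Icc 1 (6 + d)) (fishburnAlternating (6 + d)) 6 (sixAbundance d) := by
  intro A hA hcard
  have hfin : A.Finite := Set.finite_of_ncard_pos (by omega)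
  rw [fishburnAlternating_eq_generalizedFishburn,
    restrictDom_generalizedFishburn (Set.finite_Icc _ _) hA]
  obtain ⟨f, rfl⟩ : ∃ f : Fin 6 ↪o ℕ, Set.range f = A :=
    ⟨hfin.toFinset.orderEmbOfFin (by rw [← Set.ncard_eq_toFinset_card A hfin, hcard]), by simp⟩
  exact (antitone_sixAbundance (repetitions_parity_le f hA)).trans
    (sixAbundance_le_ncard_generalizedFishburn Odd f)

/-- Fishburn's alternating domain is `(6,45)`-abundant for `n = 6`, `(6,42)`-abundant
for `n = 7`, `(6,39)`-abundant for `n = 8`, and `(6,32)`-abundant for `n = 9`. -/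
theorem fishburn_six_abundance :
    IsAbundant (Set.Icc 1 6) (fishburnAlternating 6) 6 45 ∧
    IsAbundant (Set.Icc 1 7) (fishburnAlternating 7) 6 42 ∧
    IsAbundant (Set.Icc 1 8) (fishburnAlternating 8) 6 39 ∧
    IsAbundant (Set.Icc 1 9) (fishburnAlternating 9) 6 32 := by
  exact ⟨fishburn_six_abundance_general 0, fishburn_six_abundance_general 1,
    fishburn_six_abundance_general 2, fishburn_six_abundance_general 3⟩
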